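/- Let θ : ℝ → ℝ be real analytic and let R ∈ (0,∞). For x ∈ ℝ define ρ(x) ∈ ℕ ∪ {∞} as the supremum over integers n ≥ 1 of the rank of the n×n Hankel matrix with (i,j) entry 𝒮_{i+j−1}^{θ,g_R}(x)/(i+j−1)! (1 ≤ i, j ≤ n). Then ρ is constant on ℝ, i.e. ρ(x₁) = ρ(x₂) for all x₁, x₂ ∈ ℝ. -/

import Mathlib

noncomputable section

/-- `g_R(t) = -(R/π)·log(1 - (π/R)·t)`. -/
def gR (R t : ℝ) : ℝ := -(R / Real.pi) * Real.log (1 - (Real.pi / R) * t)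

/-- `f` is a (smooth) solution of `f'' + θ·f = 0`. -/
def IsSolution (θ f : ℝ → ℝ) : Prop :=
  ContDiff ℝ (⊤ : ℕ∞) f ∧ ∀ t, deriv (deriv f) t + θ t * f t = 0

/-- `f₁, f₂` is the fundamental pair of solutions of `f'' + θ·f = 0` at `x`:
`f₁(x) = f₂'(x) = 1`, `f₂(x) = f₁'(x) = 0`. -/
def IsFundPair (θ : ℝ → ℝ) (x : ℝ) (f₁ f₂ : ℝ → ℝ) : Prop :=
  IsSolution θ f₁ ∧ IsSolution θ f₂ ∧
  f₁ x = 1 ∧ deriv f₁ x = 0 ∧ f₂ x = 0 ∧ deriv f₂ x = 1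

/-- The `n`-th `g_R`-Schwarzian `𝒮_n^{θ,g_R}(x)`, computed from the fundamental pair
`f₁, f₂` at `x`: the `n`-th derivative at `t = 0` of `t ↦ h_x(x + g_R(t))`,
where `h_x = f₂/f₁`. -/
def SchR (R x : ℝ) (f₁ f₂ : ℝ → ℝ) (n : ℕ) : ℝ :=
  iteratedDeriv n (fun t => f₂ (x + gR R t) / f₁ (x + gR R t)) 0

/-- The determinant `𝒟_n^{θ,g_R}(x)` of the `n×n` Hankel matrix with `(i,j)` entry
`𝒮_{i+j-1}^{θ,g_R}(x)/(i+j-1)!`. -/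
def DetR (R x : ℝ) (f₁ f₂ : ℝ → ℝ) (n : ℕ) : ℝ :=
  (Matrix.of fun i j : Fin n =>
    SchR R x f₁ f₂ (i.1 + j.1 + 1) / (Nat.factorial (i.1 + j.1 + 1) : ℝ)).det

/-- Hypothesis (H_R): `f₁, f₂` are linearly independent solutions of `f'' + θ·f = 0`
(constant Wronskian `W = f₁f₂' - f₁'f₂ ≠ 0`) and `h = f₂/f₁` admits a meromorphic
extension `H` to the strip `{|Im z| < R}` (holomorphic off the real zeros of `f₁`,
with poles at those zeros) which satisfies `W·Im H(z)·Im z > 0` for `0 < Im z < R`. -/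
def HypR (θ : ℝ → ℝ) (R : ℝ) : Prop :=
  ∃ (f₁ f₂ : ℝ → ℝ) (H : ℂ → ℂ),
    IsSolution θ f₁ ∧ IsSolution θ f₂ ∧
    f₁ 0 * deriv f₂ 0 - deriv f₁ 0 * f₂ 0 ≠ 0 ∧
    (∀ t : ℝ, f₁ t ≠ 0 → H t = ((f₂ t / f₁ t : ℝ) : ℂ)) ∧
    DifferentiableOn ℂ H
      {z : ℂ | |z.im| < R ∧ ∀ t : ℝ, f₁ t = 0 → z ≠ (t : ℂ)} ∧
    (∀ t : ℝ, f₁ t = 0 →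
      Filter.Tendsto (fun z => ‖H z‖) (nhdsWithin (t : ℂ) {(t : ℂ)}ᶜ) Filter.atTop) ∧
    (∀ z : ℂ, 0 < z.im → z.im < R →
      0 < (f₁ 0 * deriv f₂ 0 - deriv f₁ 0 * f₂ 0) * (H z).im * z.im)

/-- `(i,j)` entry (1-based, clamped to ℕ) of the matrix `T(f,n)(t)`:
`f^{(j-i)}(t)/(j-i)!` if `i ≤ j`, and `0` otherwise. -/
def Tentry (f : ℝ → ℝ) (t : ℝ) (i j : ℕ) : ℝ :=
  if i ≤ j then iteratedDeriv (j - i) f t / (Nat.factorial (j - i) : ℝ) else 0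

end

noncomputable section

open MeasureTheory Filter

/-!
By Kronecker's theorem, the Hankel matrices of the Taylor coefficients of a germ `h` at `0` all have
rank at most `d` if and only if `Q h = P` for polynomials `P`, `Q` of degree at most `d`, not both
zero: the vectors annihilated by all these matrices are the coefficients of `Q` in reversed order.

Take `h(t) = (f₂ / f₁)(x + g_R(t))`. In terms of `T(y) = (R / π) (1 - exp (-π (y - x) / R))`, the
inverse of `t ↦ x + g_R(t)`, the condition reads `Q(T) f₂ = P(T) f₁` near `x`. Solutions of an
equation with analytic `θ` are analytic, so by the identity theorem this relation holds on all of
`ℝ`. Replacing `x` by another base point changes `T` by an affine map and `(f₁, f₂)` by an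
invertible linear one, and neither affects the existence of such `P` and `Q`.
-/

open Topology
open scoped Polynomial PowerSeries

section Hankel

open Polynomial

variable {K : Type*} [Field K]

/-- The `n × n` Hankel matrix of the sequence `a 1, a 2, …`; the term `a 0` does not occur, in
accordance with the indices `i + j - 1` for `1 ≤ i, j`. -/
def hankel (a : ℕ → K) (n : ℕ) : Matrix (Fin n) (Fin n) K :=
  Matrix.of fun i j => a (i.1 + j.1 + 1)

/-- The rank of the infinite Hankel matrix of `a 1, a 2, …`, as the supremum of the ranks of its
finite sections. -/
def hankelRank (a : ℕ → K) : ℕ∞ :=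
  ⨆ n, ((hankel a n).rank : ℕ∞)

lemma hankelRank_le_natCast_iff {a : ℕ → K} {d : ℕ} :
    hankelRank a ≤ d ↔ ∀ n, (hankel a n).rank ≤ d := by
  simp only [hankelRank, iSup_le_iff, Nat.cast_le]

lemma exists_ne_zero_forall_mem_of_antitone {R M : Type*} [Semiring R] [AddCommMonoid M]
    [Module R M] [IsArtinian R M] {p : ℕ → Submodule R M} (hp : Antitone p)
    (hne : ∀ n, p n ≠ ⊥) : ∃ v ≠ 0, ∀ n, v ∈ p n := by
  obtain ⟨m, hm⟩ := IsArtinian.monotone_stabilizes ⟨fun n => OrderDual.toDual (p n), hp.dual_right⟩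
  obtain ⟨v, hv, hv0⟩ := (p m).exists_mem_ne_zero_of_ne_bot (hne m)
  refine ⟨v, hv0, fun n => hp (le_max_right m n) ?_⟩
  have stable : p m = p (max m n) := hm (max m n) (le_max_left m n)
  exact stable ▸ hv

lemma exists_recurrence_of_hankel_rank_le {a : ℕ → K} {d : ℕ} (h : ∀ n, (hankel a n).rank ≤ d) :
    ∃ p : K[X], p ≠ 0 ∧ p.natDegree ≤ d ∧
      ∀ j, ∑ i ∈ Finset.range (d + 1), p.coeff i * a (i + j + 1) = 0 := by
  classical
  let M (n : ℕ) : Matrix (Fin n) (Fin (d + 1)) K := Matrix.of fun j i => a (j.1 + i.1 + 1)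
  have ker_ne_bot (n : ℕ) : LinearMap.ker (M n).mulVecLin ≠ ⊥ := by
    have rank_le : (M n).rank ≤ d :=
      ((hankel a (max n (d + 1))).rank_submatrix_le (Fin.castLE (le_max_left n (d + 1)))
        (Fin.castLE (le_max_right n (d + 1)))).trans (h _)
    have rank_nullity := (M n).mulVecLin.finrank_range_add_finrank_ker
    rw [Module.finrank_fin_fun] at rank_nullity
    rw [Matrix.rank] at rank_le
    rw [← Submodule.one_le_finrank_iff]
    omega
  have mem_ker (n : ℕ) (c : Fin (d + 1) → K) :
      c ∈ LinearMap.ker (M n).mulVecLin ↔ ∀ j < n, ∑ i : Fin (d + 1), a (j + i + 1) * c i = 0 := by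
    simp only [LinearMap.mem_ker, Matrix.mulVecLin_apply, funext_iff, Fin.forall_iff]
    rfl
  have ker_antitone : Antitone fun n => LinearMap.ker (M n).mulVecLin := fun m n hmn c hc =>
    (mem_ker m c).2 fun j hj => (mem_ker n c).1 hc j (hj.trans_le hmn)
  obtain ⟨c, hc0, hc⟩ := exists_ne_zero_forall_mem_of_antitone ker_antitone ker_ne_bot
  refine ⟨ofFn (d + 1) c, ?_, Nat.lt_succ_iff.1 (ofFn_natDegree_lt (by omega) c), fun j => ?_⟩
  · rwa [Ne, map_eq_zero_iff _ (injective_ofFn (d + 1))]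
  · rw [← (mem_ker (j + 1) c).1 (hc (j + 1)) j j.lt_succ_self, Finset.sum_range]
    refine Finset.sum_congr rfl fun i _ => ?_
    rw [ofFn_coeff_eq_val_of_lt c i.2, mul_comm, add_comm i.1 j]

lemma hankel_rank_le_order {a : ℕ → K} (E : LinearRecurrence K)
    (h : E.IsSolution fun i => a (i + 1)) (n : ℕ) : (hankel a n).rank ≤ E.order := by
  let restrict : (ℕ → K) →ₗ[K] Fin n → K := LinearMap.funLeft K K Fin.val
  have := Module.Finite.of_basis E.basis
  have rows_le : Submodule.span K (Set.range (hankel a n).row) ≤ E.solSpace.map restrict := by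
    rw [Submodule.span_le]
    rintro _ ⟨i, rfl⟩
    refine ⟨fun j => a (i + j + 1), fun j => ?_, rfl⟩
    simpa only [add_assoc] using h (i + j)
  calc (hankel a n).rank
      = Module.finrank K (Submodule.span K (Set.range (hankel a n).row)) :=
        Matrix.rank_eq_finrank_span_row _
    _ ≤ Module.finrank K (E.solSpace.map restrict) := Submodule.finrank_mono rows_le
    _ ≤ Module.finrank K E.solSpace := Submodule.finrank_map_le _ _
    _ = E.order := by rw [Module.finrank_eq_card_basis E.basis, Fintype.card_fin]

lemma hankel_rank_le_of_recurrence {a : ℕ → K} {p : K[X]} {d : ℕ} (hp0 : p ≠ 0)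
    (hpd : p.natDegree ≤ d)
    (hp : ∀ j, ∑ i ∈ Finset.range (d + 1), p.coeff i * a (i + j + 1) = 0) (n : ℕ) :
    (hankel a n).rank ≤ d := by
  let E : LinearRecurrence K := ⟨p.natDegree, fun i => -p.coeff i / p.leadingCoeff⟩
  refine (hankel_rank_le_order E (fun j => ?_) n).trans hpd
  have hlc : p.leadingCoeff ≠ 0 := leadingCoeff_ne_zero.2 hp0
  have hj := hp j
  rw [← Finset.sum_subset (Finset.range_subset_range.2 (Nat.succ_le_succ hpd)) fun i _ hi => by
    rw [coeff_eq_zero_of_natDegree_lt (by simpa using hi), zero_mul],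
    Finset.sum_range_succ, Finset.sum_range, coeff_natDegree] at hj
  simp only [E, div_mul_eq_mul_div, neg_mul, ← Finset.sum_div, Finset.sum_neg_distrib]
  rw [eq_div_iff hlc, add_comm j, mul_comm]
  simp only [add_comm j]
  linear_combination hj

lemma coeff_reflect_mul_mk {p : K[X]} {d : ℕ} (hpd : p.natDegree ≤ d) (a : ℕ → K) (j : ℕ) :
    PowerSeries.coeff (d + 1 + j) ((p.reflect d : K⟦X⟧) * PowerSeries.mk a) =
      ∑ i ∈ Finset.range (d + 1), p.coeff i * a (i + j + 1) := by
  have hrd : (p.reflect d).natDegree ≤ d := natDegree_reflect_le.trans (max_le le_rfl hpd)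
  rw [PowerSeries.coeff_mul, Finset.Nat.sum_antidiagonal_eq_sum_range_succ_mk,
    ← Finset.sum_range_reflect (fun i => p.coeff i * a (i + j + 1)),
    ← Finset.sum_subset (Finset.range_subset_range.2 (by omega : d + 1 ≤ (d + 1 + j).succ))]
  · refine Finset.sum_congr rfl fun k hk => ?_
    have hkd : k ≤ d := Nat.lt_succ_iff.1 (Finset.mem_range.1 hk)
    rw [Polynomial.coeff_coe, coeff_reflect, revAt_le hkd, PowerSeries.coeff_mk, Nat.add_sub_cancel]
    congr 2
    omega
  · intro k _ hk
    rw [Polynomial.coeff_coe, coeff_eq_zero_of_natDegree_lt, zero_mul]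
    exact hrd.trans_lt (not_lt.1 (Finset.mem_range.not.1 hk))

lemma hankelRank_le_iff {a : ℕ → K} {d : ℕ} :
    hankelRank a ≤ d ↔ ∃ P Q : K[X], (P ≠ 0 ∨ Q ≠ 0) ∧ P.natDegree ≤ d ∧ Q.natDegree ≤ d ∧
      (Q : K⟦X⟧) * PowerSeries.mk a = P := by
  rw [hankelRank_le_natCast_iff]
  constructor
  · intro h
    obtain ⟨p, hp0, hpd, hp⟩ := exists_recurrence_of_hankel_rank_le h
    refine ⟨((p.reflect d : K⟦X⟧) * PowerSeries.mk a).trunc (d + 1), p.reflect d,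
      .inr (reflect_eq_zero_iff.not.2 hp0), Nat.lt_succ_iff.1 (PowerSeries.natDegree_trunc_lt _ d),
      natDegree_reflect_le.trans (max_le le_rfl hpd), PowerSeries.ext fun n => ?_⟩
    rw [Polynomial.coeff_coe, PowerSeries.coeff_trunc]
    split_ifs with hn
    · rfl
    · obtain ⟨j, rfl⟩ := Nat.exists_eq_add_of_le (not_lt.1 hn)
      rw [coeff_reflect_mul_mk hpd, hp]
  · rintro ⟨P, Q, hPQ, hPd, hQd, h⟩
    have hQ : Q ≠ 0 := by
      rintro rfl
      rw [coe_zero, zero_mul, eq_comm, coe_eq_zero_iff] at h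
      exact hPQ.elim (absurd h) (absurd rfl)
    have hQrd : (Q.reflect d).natDegree ≤ d := natDegree_reflect_le.trans (max_le le_rfl hQd)
    refine hankel_rank_le_of_recurrence (reflect_eq_zero_iff.not.2 hQ) hQrd fun j => ?_
    rw [← coeff_reflect_mul_mk hQrd, reflect_reflect, h, Polynomial.coeff_coe,
      coeff_eq_zero_of_natDegree_lt (by omega)]

end Hankel

section TaylorSeries

open Polynomial
open scoped Nat

variable {𝕜 : Type*} [NontriviallyNormedField 𝕜]

/-- The formal Taylor series of `f` at `x`, in the variable `y - x`. -/
def taylorSeries (f : 𝕜 → 𝕜) (x : 𝕜) : 𝕜⟦X⟧ :=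
  PowerSeries.mk fun n => iteratedDeriv n f x / n !

lemma coeff_taylorSeries (f : 𝕜 → 𝕜) (x : 𝕜) (n : ℕ) :
    PowerSeries.coeff n (taylorSeries f x) = iteratedDeriv n f x / n ! :=
  PowerSeries.coeff_mk _ _

lemma taylorSeries_congr {f g : 𝕜 → 𝕜} {x : 𝕜} (h : f =ᶠ[𝓝 x] g) :
    taylorSeries f x = taylorSeries g x := by
  ext n
  rw [coeff_taylorSeries, coeff_taylorSeries, h.iteratedDeriv_eq]

lemma taylorSeries_add [CompleteSpace 𝕜] {f g : 𝕜 → 𝕜} {x : 𝕜} (hf : AnalyticAt 𝕜 f x)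
    (hg : AnalyticAt 𝕜 g x) :
    taylorSeries (fun y => f y + g y) x = taylorSeries f x + taylorSeries g x := by
  ext n
  rw [map_add, coeff_taylorSeries, coeff_taylorSeries, coeff_taylorSeries,
    iteratedDeriv_fun_add hf.contDiffAt hg.contDiffAt, add_div]

variable [CharZero 𝕜]

lemma taylorSeries_deriv (f : 𝕜 → 𝕜) (x : 𝕜) :
    taylorSeries (deriv f) x = d⁄dX 𝕜 (taylorSeries f x) := by
  ext n
  have := Nat.cast_ne_zero (R := 𝕜).2 n.factorial_ne_zero
  have := Nat.cast_add_one_ne_zero (R := 𝕜) n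
  rw [PowerSeries.coeff_derivative, coeff_taylorSeries, coeff_taylorSeries, ← iteratedDeriv_succ',
    Nat.factorial_succ]
  push_cast
  field_simp

lemma taylorSeries_eval (p : 𝕜[X]) (x : 𝕜) :
    taylorSeries (fun y => p.eval y) x = (taylor x p : 𝕜[X]) := by
  have iteratedDeriv_eval (n : ℕ) (y : 𝕜) :
      iteratedDeriv n (fun y => p.eval y) y = (derivative^[n] p).eval y := by
    induction n generalizing y with
    | zero => rfl
    | succ n ih =>
      rw [iteratedDeriv_succ, funext ih, Polynomial.deriv, Function.iterate_succ_apply']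
  ext n
  have iterate_derivative : derivative^[n] p = n ! • hasseDeriv n p :=
    (congrFun (factorial_smul_hasseDeriv n) p).symm
  rw [coeff_taylorSeries, iteratedDeriv_eval, Polynomial.coeff_coe, taylor_coeff,
    iterate_derivative, eval_smul, nsmul_eq_mul,
    mul_div_cancel_left₀ _ (Nat.cast_ne_zero.2 n.factorial_ne_zero)]

variable [CompleteSpace 𝕜]

lemma taylorSeries_mul {f g : 𝕜 → 𝕜} {x : 𝕜} (hf : AnalyticAt 𝕜 f x)
    (hg : AnalyticAt 𝕜 g x) :
    taylorSeries (fun y => f y * g y) x = taylorSeries f x * taylorSeries g x := by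
  ext n
  rw [PowerSeries.coeff_mul, Finset.Nat.sum_antidiagonal_eq_sum_range_succ_mk, coeff_taylorSeries,
    iteratedDeriv_fun_mul hf.contDiffAt hg.contDiffAt, Finset.sum_div]
  refine Finset.sum_congr rfl fun i hi => ?_
  rw [coeff_taylorSeries, coeff_taylorSeries,
    Nat.cast_choose 𝕜 (Nat.lt_succ_iff.1 (Finset.mem_range.1 hi))]
  have := Nat.cast_ne_zero (R := 𝕜).2 n.factorial_ne_zero
  have := Nat.cast_ne_zero (R := 𝕜).2 i.factorial_ne_zero
  have := Nat.cast_ne_zero (R := 𝕜).2 (n - i).factorial_ne_zero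
  field_simp

lemma taylorSeries_eq_mk {f : 𝕜 → 𝕜} {x : 𝕜} {a : ℕ → 𝕜}
    (h : HasFPowerSeriesAt f (FormalMultilinearSeries.ofScalars 𝕜 a) x) :
    taylorSeries f x = PowerSeries.mk a := by
  have := FormalMultilinearSeries.ofScalars_series_injective 𝕜 𝕜
    (h.analyticAt.hasFPowerSeriesAt.eq_formalMultilinearSeries h)
  exact congrArg PowerSeries.mk this

lemma taylorSeries_eq_iff {f g : 𝕜 → 𝕜} {x : 𝕜} (hf : AnalyticAt 𝕜 f x)
    (hg : AnalyticAt 𝕜 g x) : taylorSeries f x = taylorSeries g x ↔ f =ᶠ[𝓝 x] g := by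
  refine ⟨fun h => ?_, taylorSeries_congr⟩
  have coeff_eq (n : ℕ) : iteratedDeriv n f x / n ! = iteratedDeriv n g x / n ! := by
    rw [← coeff_taylorSeries, h, coeff_taylorSeries]
  have hf' := hf.hasFPowerSeriesAt
  simp only [coeff_eq] at hf'
  filter_upwards [hf'.eventually_hasSum_sub, hg.hasFPowerSeriesAt.eventually_hasSum_sub]
    with y hfy hgy using hfy.unique hgy

lemma hankelRank_iteratedDeriv_le_iff {h : 𝕜 → 𝕜} (hh : AnalyticAt 𝕜 h 0) {d : ℕ} :
    hankelRank (fun n => iteratedDeriv n h 0 / n !) ≤ d ↔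
      ∃ P Q : 𝕜[X], (P ≠ 0 ∨ Q ≠ 0) ∧ P.natDegree ≤ d ∧ Q.natDegree ≤ d ∧
        ∀ᶠ t in 𝓝 0, Q.eval t * h t = P.eval t := by
  have hpoly (p : 𝕜[X]) : AnalyticAt 𝕜 (fun t => p.eval t) 0 := analyticAt_id.aeval_polynomial p
  have key (P Q : 𝕜[X]) : (Q : 𝕜⟦X⟧) * taylorSeries h 0 = P ↔
      ∀ᶠ t in 𝓝 0, Q.eval t * h t = P.eval t := by
    rw [← taylor_zero P, ← taylor_zero Q, ← taylorSeries_eval, ← taylorSeries_eval, taylor_zero,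
      taylor_zero, ← taylorSeries_mul (hpoly Q) hh]
    exact taylorSeries_eq_iff ((hpoly Q).mul hh) (hpoly P)
  simp only [hankelRank_le_iff, ← key, taylorSeries]

end TaylorSeries

section LocalSolution

open scoped Nat

variable {𝕜 : Type*} [RCLike 𝕜]

lemma exists_norm_coeff_taylorSeries_le {f : 𝕜 → 𝕜} {x : 𝕜} (hf : AnalyticAt 𝕜 f x) :
    ∃ K : ℝ, 1 ≤ K ∧ ∀ n, ‖PowerSeries.coeff n (taylorSeries f x)‖ ≤ K ^ (n + 1) := by
  obtain ⟨r, hr, hr_lt⟩ := ENNReal.lt_iff_exists_nnreal_btwn.1 hf.hasFPowerSeriesAt.radius_pos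
  obtain ⟨C, -, hC⟩ := FormalMultilinearSeries.norm_mul_pow_le_of_lt_radius _ hr_lt
  have hr0 : (0 : ℝ) < r := by exact_mod_cast hr
  have hCK : C ≤ max 1 (max C r⁻¹) := (le_max_left _ _).trans (le_max_right _ _)
  have hrK : (r : ℝ)⁻¹ ≤ max 1 (max C r⁻¹) := (le_max_right _ _).trans (le_max_right _ _)
  refine ⟨max 1 (max C r⁻¹), le_max_left _ _, fun n => ?_⟩
  have hCn := hC n
  rw [FormalMultilinearSeries.ofScalars_norm] at hCn
  calc ‖PowerSeries.coeff n (taylorSeries f x)‖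
      ≤ C * (r : ℝ)⁻¹ ^ n := by
        rwa [coeff_taylorSeries, inv_pow, ← div_eq_mul_inv, le_div_iff₀ (pow_pos hr0 n)]
    _ ≤ max 1 (max C r⁻¹) * max 1 (max C r⁻¹) ^ n := by gcongr
    _ = max 1 (max C r⁻¹) ^ (n + 1) := (pow_succ' _ _).symm

lemma exists_taylorSeries_eq_mk {a : ℕ → 𝕜} {M K : ℝ} (hK : 0 < K)
    (ha : ∀ n, ‖a n‖ ≤ M * K ^ n) (x : 𝕜) :
    ∃ f : 𝕜 → 𝕜, AnalyticAt 𝕜 f x ∧ taylorSeries f x = PowerSeries.mk a := by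
  let p := FormalMultilinearSeries.ofScalars 𝕜 a
  lift K to NNReal using hK.le
  have bound (n : ℕ) : ‖p n‖ * (K⁻¹ : NNReal) ^ n ≤ M := by
    rw [FormalMultilinearSeries.ofScalars_norm, NNReal.coe_inv, inv_pow, ← div_eq_mul_inv,
      div_le_iff₀ (pow_pos hK n)]
    exact ha n
  have radius_pos : 0 < p.radius :=
    lt_of_lt_of_le (ENNReal.coe_pos.2 (inv_pos.2 (NNReal.coe_pos.1 hK)))
      (p.le_radius_of_bound M bound)
  have hp : HasFPowerSeriesAt (fun y => p.sum (y - x)) p x := by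
    simpa using ((p.hasFPowerSeriesOnBall radius_pos).comp_sub x).hasFPowerSeriesAt
  exact ⟨_, hp.analyticAt, taylorSeries_eq_mk hp⟩

/-- The Taylor coefficients of the solution of `f'' + τ f = 0` with `f = p` and `f' = q` at the
origin. -/
def odeCoeff (τ : 𝕜⟦X⟧) (p q : 𝕜) : ℕ → 𝕜
  | 0 => p
  | 1 => q
  | n + 2 => -(∑ i : Fin (n + 1), PowerSeries.coeff i τ * odeCoeff τ p q (n - i)) /
      ((n + 2) * (n + 1))
  decreasing_by omega

lemma odeCoeff_add_two (τ : 𝕜⟦X⟧) (p q : 𝕜) (n : ℕ) :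
    odeCoeff τ p q (n + 2) =
      -(∑ i ∈ Finset.range (n + 1), PowerSeries.coeff i τ * odeCoeff τ p q (n - i)) /
        ((n + 2) * (n + 1)) := by
  rw [odeCoeff, Finset.sum_range]

lemma derivative_derivative_mk_odeCoeff (τ : 𝕜⟦X⟧) (p q : 𝕜) :
    d⁄dX 𝕜 (d⁄dX 𝕜 (PowerSeries.mk (odeCoeff τ p q))) + τ * PowerSeries.mk (odeCoeff τ p q) =
      0 := by
  ext n
  have succ_ne_zero := Nat.cast_add_one_ne_zero (R := 𝕜) n
  have add_two_ne_zero : (n + 2 : 𝕜) ≠ 0 := by exact_mod_cast (n + 1).succ_ne_zero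
  simp only [map_add, PowerSeries.coeff_derivative, PowerSeries.coeff_mk, PowerSeries.coeff_mul,
    Finset.Nat.sum_antidiagonal_eq_sum_range_succ_mk, odeCoeff_add_two, map_zero]
  push_cast
  field_simp
  ring

lemma norm_odeCoeff_le {τ : 𝕜⟦X⟧} {K : ℝ} (hK : 1 ≤ K)
    (hτ : ∀ n, ‖PowerSeries.coeff n τ‖ ≤ K ^ (n + 2)) (p q : 𝕜) (n : ℕ) :
    ‖odeCoeff τ p q n‖ ≤ (‖p‖ + ‖q‖) * K ^ n := by
  induction n using Nat.strong_induction_on with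
  | _ n ih =>
  match n with
  | 0 => simp [odeCoeff]
  | 1 =>
    rw [odeCoeff, pow_one]
    nlinarith [norm_nonneg p, norm_nonneg q]
  | n + 2 =>
    have term_le (i : ℕ) (hi : i ∈ Finset.range (n + 1)) :
        ‖PowerSeries.coeff i τ * odeCoeff τ p q (n - i)‖ ≤ (‖p‖ + ‖q‖) * K ^ (n + 2) := by
      have hin : i ≤ n := Nat.lt_succ_iff.1 (Finset.mem_range.1 hi)
      calc ‖PowerSeries.coeff i τ * odeCoeff τ p q (n - i)‖
          ≤ K ^ (i + 2) * ((‖p‖ + ‖q‖) * K ^ (n - i)) :=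
            norm_mul_le_of_le (hτ i) (ih _ (by omega))
        _ = (‖p‖ + ‖q‖) * K ^ (n + 2) := by
            rw [mul_left_comm, ← pow_add, show i + 2 + (n - i) = n + 2 by omega]
    have denom : ‖((n + 2) * (n + 1) : 𝕜)‖ = (n + 2) * (n + 1) := by
      exact_mod_cast RCLike.norm_natCast (K := 𝕜) ((n + 2) * (n + 1))
    rw [odeCoeff_add_two, norm_div, norm_neg, denom, div_le_iff₀ (by positivity)]
    calc ‖∑ i ∈ Finset.range (n + 1), PowerSeries.coeff i τ * odeCoeff τ p q (n - i)‖
        ≤ (Finset.range (n + 1)).card • ((‖p‖ + ‖q‖) * K ^ (n + 2)) :=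
          norm_sum_le_of_le _ term_le |>.trans_eq (Finset.sum_const _)
      _ = (‖p‖ + ‖q‖) * K ^ (n + 2) * (1 * (n + 1)) := by
          rw [Finset.card_range, nsmul_eq_mul, one_mul, mul_comm, Nat.cast_succ]
      _ ≤ (‖p‖ + ‖q‖) * K ^ (n + 2) * ((n + 2) * (n + 1)) := by
          gcongr
          linarith [n.cast_nonneg (α := ℝ)]

lemma exists_analyticAt_solution {θ : 𝕜 → 𝕜} {x : 𝕜} (hθ : AnalyticAt 𝕜 θ x) (p q : 𝕜) :
    ∃ f : 𝕜 → 𝕜, AnalyticAt 𝕜 f x ∧ f x = p ∧ deriv f x = q ∧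
      ∀ᶠ y in 𝓝 x, deriv (deriv f) y + θ y * f y = 0 := by
  obtain ⟨K, hK, hτ⟩ := exists_norm_coeff_taylorSeries_le hθ
  obtain ⟨f, hf, hfa⟩ := exists_taylorSeries_eq_mk (zero_lt_one.trans_le hK)
    (norm_odeCoeff_le hK (fun n => (hτ n).trans (pow_le_pow_right₀ hK (by omega))) p q) x
  have coeff_f (n : ℕ) : iteratedDeriv n f x / n ! = odeCoeff (taylorSeries θ x) p q n := by
    rw [← coeff_taylorSeries, hfa, PowerSeries.coeff_mk]
  refine ⟨f, hf, ?_, ?_, ?_⟩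
  · simpa [odeCoeff] using coeff_f 0
  · simpa [odeCoeff] using coeff_f 1
  · refine (taylorSeries_eq_iff (hf.deriv.deriv.add (hθ.mul hf)) analyticAt_const).1 ?_
    calc taylorSeries (fun y => deriv (deriv f) y + θ y * f y) x = 0 := by
          rw [taylorSeries_add hf.deriv.deriv (hθ.fun_mul hf), taylorSeries_mul hθ hf,
            taylorSeries_deriv, taylorSeries_deriv, hfa, derivative_derivative_mk_odeCoeff]
      _ = taylorSeries (fun _ => 0) x := by
          ext n
          simp [coeff_taylorSeries]

end LocalSolution

section Wronskian

variable {𝕜 : Type*} [RCLike 𝕜] {θ f g F₁ F₂ : 𝕜 → 𝕜} {s : Set 𝕜} {x : 𝕜}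

/-- `f` solves `f'' + θ f = 0` on `s`, where both derivatives are required to exist. -/
def IsSolutionOn (θ f : 𝕜 → 𝕜) (s : Set 𝕜) : Prop :=
  ∀ t ∈ s, HasDerivAt f (deriv f t) t ∧ HasDerivAt (deriv f) (-(θ t * f t)) t

/-- The Wronskian `f g' - f' g`. -/
def wronskian (f g : 𝕜 → 𝕜) (t : 𝕜) : 𝕜 :=
  f t * deriv g t - deriv f t * g t

lemma IsSolutionOn.wronskian_eq (hf : IsSolutionOn θ f s) (hg : IsSolutionOn θ g s)
    (hs : IsOpen s) (hs' : IsPreconnected s) {y : 𝕜} (hx : x ∈ s) (hy : y ∈ s) :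
    wronskian f g y = wronskian f g x := by
  have hasDerivAt_wronskian (t : 𝕜) (ht : t ∈ s) : HasDerivAt (wronskian f g) 0 t := by
    obtain ⟨hf', hf''⟩ := hf t ht
    obtain ⟨hg', hg''⟩ := hg t ht
    exact ((hf'.mul hg'').sub (hf''.mul hg')).congr_deriv (by ring)
  exact hs.is_const_of_deriv_eq_zero hs'
    (fun t ht => (hasDerivAt_wronskian t ht).differentiableAt.differentiableWithinAt)
    (fun t ht => (hasDerivAt_wronskian t ht).deriv) hy hx

lemma IsSolutionOn.eq_add_mul (hf : IsSolutionOn θ f s) (hF₁ : IsSolutionOn θ F₁ s)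
    (hF₂ : IsSolutionOn θ F₂ s) (hs : IsOpen s) (hs' : IsPreconnected s) (hx : x ∈ s)
    (hF₁x : F₁ x = 1) (hF₁x' : deriv F₁ x = 0) (hF₂x : F₂ x = 0) (hF₂x' : deriv F₂ x = 1)
    {y : 𝕜} (hy : y ∈ s) : f y = f x * F₁ y + deriv f x * F₂ y := by
  have w₁₂ := hF₁.wronskian_eq hF₂ hs hs' hx hy
  have w₁ := hf.wronskian_eq hF₁ hs hs' hx hy
  have w₂ := hf.wronskian_eq hF₂ hs hs' hx hy
  simp only [wronskian, hF₁x, hF₁x', hF₂x, hF₂x'] at w₁₂ w₁ w₂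
  -- Plücker: `f * W(F₁, F₂) - F₁ * W(f, F₂) + F₂ * W(f, F₁) = 0`
  linear_combination F₁ y * w₂ - F₂ y * w₁ - f y * w₁₂

lemma eventually_hasDerivAt_of_ode (hf : AnalyticAt 𝕜 f x)
    (h : ∀ᶠ t in 𝓝 x, deriv (deriv f) t + θ t * f t = 0) :
    ∀ᶠ t in 𝓝 x, HasDerivAt f (deriv f t) t ∧ HasDerivAt (deriv f) (-(θ t * f t)) t := by
  filter_upwards [h, hf.eventually_analyticAt] with t ht hft
  refine ⟨hft.differentiableAt.hasDerivAt, ?_⟩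
  rw [← eq_neg_of_add_eq_zero_left ht]
  exact hft.deriv.differentiableAt.hasDerivAt

lemma IsSolutionOn.analyticAt (hf : IsSolutionOn θ f s) (hs : IsOpen s) (hx : x ∈ s)
    (hθ : AnalyticAt 𝕜 θ x) : AnalyticAt 𝕜 f x := by
  obtain ⟨F₁, hF₁, hF₁x, hF₁x', hF₁_ode⟩ := exists_analyticAt_solution hθ 1 0
  obtain ⟨F₂, hF₂, hF₂x, hF₂x', hF₂_ode⟩ := exists_analyticAt_solution hθ 0 1
  obtain ⟨ε, hε, hball⟩ := Metric.eventually_nhds_iff_ball.1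
    ((eventually_hasDerivAt_of_ode hF₁ hF₁_ode).and
      ((eventually_hasDerivAt_of_ode hF₂ hF₂_ode).and (hs.mem_nhds hx)))
  have f_eq : f =ᶠ[𝓝 x] fun y => f x * F₁ y + deriv f x * F₂ y := by
    filter_upwards [Metric.ball_mem_nhds x hε] with y hy
    exact IsSolutionOn.eq_add_mul (fun t ht => hf t (hball t ht).2.2) (fun t ht => (hball t ht).1)
      (fun t ht => (hball t ht).2.1) Metric.isOpen_ball (convex_ball x ε).isPreconnected
      (Metric.mem_ball_self hε) hF₁x hF₁x' hF₂x hF₂x' hy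
  exact ((analyticAt_const.fun_mul hF₁).add (analyticAt_const.fun_mul hF₂)).congr f_eq.symm

end Wronskian

section LinearODE

open scoped Interval Nat

variable {E : Type*} [NormedAddCommGroup E] [NormedSpace ℝ E]

/-- The `n`-th term of the Dyson series (the iterated integrals produced by Picard iteration) of the
initial value problem `X' = A X`, `X x = v`. -/
def dysonTerm (A : ℝ → E →L[ℝ] E) (x : ℝ) (v : E) : ℕ → ℝ → E
  | 0 => fun _ => v
  | n + 1 => fun t => ∫ s in x..t, A s (dysonTerm A x v n s)

variable {A : ℝ → E →L[ℝ] E} {x : ℝ} {v : E}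

lemma norm_dysonTerm_le {K t : ℝ} (hK : ∀ s ∈ [[x, t]], ‖A s‖ ≤ K) (n : ℕ) :
    ‖dysonTerm A x v n t‖ ≤ ‖v‖ * ((K * |t - x|) ^ n / n !) := by
  have hK0 : 0 ≤ K := (norm_nonneg _).trans (hK x Set.left_mem_uIcc)
  induction n generalizing t with
  | zero => simp [dysonTerm]
  | succ n ih =>
    have integrand_le (s : ℝ) (hs : s ∈ Ι x t) :
        ‖A s (dysonTerm A x v n s)‖ ≤ K * ‖v‖ * K ^ n / n ! * |s - x| ^ n := by
      have hs' : s ∈ [[x, t]] := Set.uIoc_subset_uIcc hs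
      calc ‖A s (dysonTerm A x v n s)‖ ≤ K * (‖v‖ * ((K * |s - x|) ^ n / n !)) :=
            (A s).le_of_opNorm_le_of_le (hK s hs')
              (ih fun u hu => hK u (Set.uIcc_subset_uIcc_left hs' hu))
        _ = K * ‖v‖ * K ^ n / n ! * |s - x| ^ n := by ring
    calc ‖dysonTerm A x v (n + 1) t‖
        ≤ |∫ s in x..t, K * ‖v‖ * K ^ n / n ! * |s - x| ^ n| :=
          intervalIntegral.norm_integral_le_abs_of_norm_le
            (ae_restrict_of_forall_mem measurableSet_uIoc integrand_le)
            (Continuous.intervalIntegrable (by fun_prop) _ _)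
      _ = K * ‖v‖ * K ^ n / n ! * (|t - x| ^ (n + 1) / (n + 1)) := by
          rw [intervalIntegral.integral_const_mul, abs_mul, abs_of_nonneg (by positivity),
            intervalIntegral.abs_intervalIntegral_eq, integral_pow_abs_sub_uIoc,
            abs_of_nonneg (by positivity)]
      _ = ‖v‖ * ((K * |t - x|) ^ (n + 1) / (n + 1)!) := by
          rw [Nat.factorial_succ]
          push_cast
          field_simp
          ring

variable [CompleteSpace E]

lemma continuous_dysonTerm (hA : Continuous A) (n : ℕ) : Continuous (dysonTerm A x v n) := by
  induction n with
  | zero => exact continuous_const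
  | succ n ih =>
    exact continuous_iff_continuousAt.2 fun t =>
      ((hA.clm_apply ih).integral_hasStrictDerivAt x t).hasDerivAt.continuousAt

lemma hasDerivAt_dysonTerm_succ (hA : Continuous A) (n : ℕ) (t : ℝ) :
    HasDerivAt (dysonTerm A x v (n + 1)) (A t (dysonTerm A x v n t)) t :=
  ((hA.clm_apply (continuous_dysonTerm hA n)).integral_hasStrictDerivAt x t).hasDerivAt

lemma exists_forall_hasDerivAt_clm_apply (hA : Continuous A) (x : ℝ) (v : E) :
    ∃ X : ℝ → E, X x = v ∧ ∀ t, HasDerivAt X (A t (X t)) t := by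
  let X (t : ℝ) : E := v + ∑' n, dysonTerm A x v (n + 1) t
  have X_x : X x = v := by simp [X, dysonTerm]
  refine ⟨X, X_x, fun t => ?_⟩
  obtain ⟨K, hK⟩ := (isCompact_closedBall x (|t - x| + 1)).exists_bound_of_continuousOn
    hA.continuousOn
  have uIcc_subset {s : ℝ} (hs : s ∈ Metric.ball x (|t - x| + 1)) :
      [[x, s]] ⊆ Metric.closedBall x (|t - x| + 1) :=
    (convex_closedBall _ _).ordConnected.uIcc_subset
      (Metric.mem_closedBall_self (by positivity)) (Metric.ball_subset_closedBall hs)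
  have term_le (n : ℕ) (s : ℝ) (hs : s ∈ Metric.ball x (|t - x| + 1)) :
      ‖A s (dysonTerm A x v n s)‖ ≤ K * (‖v‖ * ((K * (|t - x| + 1)) ^ n / n !)) := by
    have hAs : ‖A s‖ ≤ K := hK s (Metric.ball_subset_closedBall hs)
    have hK0 : 0 ≤ K := (norm_nonneg _).trans hAs
    have hs' : |s - x| ≤ |t - x| + 1 := (Metric.mem_ball.1 hs).le
    calc ‖A s (dysonTerm A x v n s)‖ ≤ K * (‖v‖ * ((K * |s - x|) ^ n / n !)) :=
          (A s).le_of_opNorm_le_of_le hAs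
            (norm_dysonTerm_le (fun u hu => hK u (uIcc_subset hs hu)) n)
      _ ≤ K * (‖v‖ * ((K * (|t - x| + 1)) ^ n / n !)) := by gcongr
  have ht : t ∈ Metric.ball x (|t - x| + 1) := by simp [Real.dist_eq]
  have summable_dysonTerm : Summable fun n => dysonTerm A x v n t :=
    .of_norm_bounded ((Real.summable_pow_div_factorial _).mul_left _)
      (norm_dysonTerm_le fun u hu => hK u (uIcc_subset ht hu))
  have hasDerivAt_tsum := hasDerivAt_tsum_of_isPreconnected
    (((Real.summable_pow_div_factorial (K * (|t - x| + 1))).mul_left ‖v‖).mul_left K)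
    Metric.isOpen_ball (convex_ball x _).isPreconnected
    (fun n s _ => hasDerivAt_dysonTerm_succ hA n s) term_le ht
    ((summable_nat_add_iff (f := fun n => dysonTerm A x v n t) 1).2 summable_dysonTerm) ht
  have tsum_eq : ∑' n, A t (dysonTerm A x v n t) = A t (X t) := by
    rw [← (A t).map_tsum summable_dysonTerm, summable_dysonTerm.tsum_eq_zero_add]
    rfl
  exact tsum_eq ▸ hasDerivAt_tsum.const_add v

end LinearODE

section Solutions

variable {θ f : ℝ → ℝ}

lemma exists_isSolutionOn_univ (hθ : Continuous θ) (x p q : ℝ) :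
    ∃ f, IsSolutionOn θ f Set.univ ∧ f x = p ∧ deriv f x = q := by
  let A (t : ℝ) : ℝ × ℝ →L[ℝ] ℝ × ℝ :=
    .inl ℝ ℝ ℝ ∘L .snd ℝ ℝ ℝ - θ t • .inr ℝ ℝ ℝ ∘L .fst ℝ ℝ ℝ
  obtain ⟨X, hXx, hX⟩ := exists_forall_hasDerivAt_clm_apply (A := A) (by fun_prop) x (p, q)
  have hX' (t : ℝ) : HasDerivAt X ((X t).2, -(θ t * (X t).1)) t :=
    (hX t).congr_deriv (by simp [A])
  have hX₁ (t : ℝ) : HasDerivAt (fun t => (X t).1) (X t).2 t := (hX' t).fst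
  have deriv_X₁ : deriv (fun t => (X t).1) = fun t => (X t).2 := funext fun t => (hX₁ t).deriv
  refine ⟨fun t => (X t).1, fun t _ => ?_, congrArg Prod.fst hXx, ?_⟩
  · rw [deriv_X₁]
    exact ⟨hX₁ t, (hX' t).snd⟩
  · rw [deriv_X₁]
    exact congrArg Prod.snd hXx

lemma IsSolution.isSolutionOn_univ (hf : IsSolution θ f) : IsSolutionOn θ f Set.univ := by
  intro t _
  rw [← eq_neg_of_add_eq_zero_left (hf.2 t)]
  exact ⟨(hf.1.differentiable (by simp) t).hasDerivAt,
    ((contDiff_infty_iff_deriv.1 hf.1).2.differentiable (by simp) t).hasDerivAt⟩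

lemma IsSolutionOn.isSolution (hf : IsSolutionOn θ f Set.univ) (hθ : ∀ x, AnalyticAt ℝ θ x) :
    IsSolution θ f :=
  ⟨contDiff_iff_contDiffAt.2 fun x =>
    (hf.analyticAt isOpen_univ (Set.mem_univ x) (hθ x)).contDiffAt,
    fun t => by rw [(hf t (Set.mem_univ t)).2.deriv, neg_add_cancel]⟩

lemma IsSolution.analyticOnNhd (hf : IsSolution θ f) (hθ : ∀ x, AnalyticAt ℝ θ x) :
    AnalyticOnNhd ℝ f Set.univ := fun x hx =>
  hf.isSolutionOn_univ.analyticAt isOpen_univ hx (hθ x)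

lemma exists_isFundPair (hθ : ∀ x, AnalyticAt ℝ θ x) (x : ℝ) :
    ∃ f₁ f₂, IsFundPair θ x f₁ f₂ := by
  have hθ' : Continuous θ := continuous_iff_continuousAt.2 fun t => (hθ t).continuousAt
  obtain ⟨f₁, hf₁, hf₁x, hf₁x'⟩ := exists_isSolutionOn_univ hθ' x 1 0
  obtain ⟨f₂, hf₂, hf₂x, hf₂x'⟩ := exists_isSolutionOn_univ hθ' x 0 1
  exact ⟨f₁, f₂, hf₁.isSolution hθ, hf₂.isSolution hθ, hf₁x, hf₁x', hf₂x, hf₂x'⟩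

lemma IsFundPair.eq_add_mul {x : ℝ} {F₁ F₂ : ℝ → ℝ} (h : IsFundPair θ x F₁ F₂)
    (hf : IsSolution θ f) (y : ℝ) : f y = f x * F₁ y + deriv f x * F₂ y := by
  obtain ⟨hF₁, hF₂, hF₁x, hF₁x', hF₂x, hF₂x'⟩ := h
  exact hf.isSolutionOn_univ.eq_add_mul hF₁.isSolutionOn_univ hF₂.isSolutionOn_univ isOpen_univ
    isPreconnected_univ (Set.mem_univ x) hF₁x hF₁x' hF₂x hF₂x' (Set.mem_univ y)

lemma IsFundPair.wronskian_eq_one {x : ℝ} {f₁ f₂ : ℝ → ℝ} (h : IsFundPair θ x f₁ f₂) (y : ℝ) :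
    wronskian f₁ f₂ y = 1 := by
  obtain ⟨hf₁, hf₂, hf₁x, hf₁x', -, hf₂x'⟩ := h
  rw [hf₁.isSolutionOn_univ.wronskian_eq hf₂.isSolutionOn_univ isOpen_univ isPreconnected_univ
    (Set.mem_univ x) (Set.mem_univ y), wronskian, hf₁x, hf₁x', hf₂x']
  norm_num

end Solutions

section Chart

/-- The inverse `u ↦ (R/π)(1 - e^{-πu/R})` of the chart `gR R`. -/
def gRInv (R u : ℝ) : ℝ := R / Real.pi * (1 - Real.exp (-(Real.pi / R) * u))

variable {R : ℝ}

lemma gR_zero (R : ℝ) : gR R 0 = 0 := by simp [gR]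

lemma gR_gRInv (hR : R ≠ 0) (u : ℝ) : gR R (gRInv R u) = u := by
  have : 1 - Real.pi / R * gRInv R u = Real.exp (-(Real.pi / R) * u) := by
    rw [gRInv]
    field_simp
    ring
  rw [gR, this, Real.log_exp]
  field_simp

lemma gRInv_gR (hR : R ≠ 0) {t : ℝ} (ht : 0 < 1 - Real.pi / R * t) : gRInv R (gR R t) = t := by
  have : -(Real.pi / R) * gR R t = Real.log (1 - Real.pi / R * t) := by
    rw [gR]
    field_simp
  rw [gRInv, this, Real.exp_log ht]
  field_simp
  ring

lemma gRInv_add (R u v : ℝ) :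
    gRInv R (u + v) = Real.exp (-(Real.pi / R) * v) * gRInv R u + gRInv R v := by
  rw [gRInv, gRInv, gRInv, mul_add, Real.exp_add]
  ring

lemma analyticAt_gR {t : ℝ} (ht : 0 < 1 - Real.pi / R * t) : AnalyticAt ℝ (gR R) t :=
  analyticAt_const.fun_mul
    ((analyticAt_const.sub (analyticAt_const.fun_mul analyticAt_id)).log ht)

lemma analyticAt_gRInv (R u : ℝ) : AnalyticAt ℝ (gRInv R) u :=
  analyticAt_const.fun_mul
    (analyticAt_const.sub (analyticAt_const.fun_mul analyticAt_id).rexp)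

end Chart

section PolyRelation

variable {α K : Type*} [Field K] {T f₁ f₂ F₁ F₂ : α → K} {d : ℕ}

/-- The ratio `f₂ / f₁` is a rational function of degree at most `d` in the coordinate `T`, in the
sense that `Q(T) f₂ = P(T) f₁` for polynomials `P`, `Q` of degree at most `d`, not both zero. -/
def HasPolyRelation (T f₁ f₂ : α → K) (d : ℕ) : Prop :=
  ∃ P Q : K[X], (P ≠ 0 ∨ Q ≠ 0) ∧ P.natDegree ≤ d ∧ Q.natDegree ≤ d ∧
    ∀ y, Q.eval (T y) * f₂ y = P.eval (T y) * f₁ y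

lemma HasPolyRelation.of_affine {s b : K} (hs : s ≠ 0)
    (h : HasPolyRelation (fun y => s * T y + b) f₁ f₂ d) : HasPolyRelation T f₁ f₂ d := by
  obtain ⟨P, Q, hPQ, hP, hQ, h⟩ := h
  have comp_ne_zero {p : K[X]} (hp : p ≠ 0) :
      p.comp (Polynomial.C s * Polynomial.X + Polynomial.C b) ≠ 0 := by
    contrapose! hp
    refine (Polynomial.comp_eq_zero_iff.1 hp).resolve_right fun h => ?_
    simpa [hs] using congrArg (Polynomial.coeff · 1) h.2
  have natDegree_comp (p : K[X]) :
      (p.comp (Polynomial.C s * Polynomial.X + Polynomial.C b)).natDegree = p.natDegree := by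
    rw [Polynomial.natDegree_comp, Polynomial.natDegree_linear hs, mul_one]
  exact ⟨_, _, hPQ.imp comp_ne_zero comp_ne_zero, (natDegree_comp P).trans_le hP,
    (natDegree_comp Q).trans_le hQ, fun y => by simpa using h y⟩

lemma HasPolyRelation.of_linear {a b c e : K} (hdet : a * e - b * c ≠ 0)
    (hf₁ : ∀ y, f₁ y = a * F₁ y + b * F₂ y) (hf₂ : ∀ y, f₂ y = c * F₁ y + e * F₂ y)
    (h : HasPolyRelation T f₁ f₂ d) : HasPolyRelation T F₁ F₂ d := by
  obtain ⟨P, Q, hPQ, hP, hQ, h⟩ := h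
  refine ⟨a • P - c • Q, e • Q - b • P, ?_, ?_, ?_, fun y => ?_⟩
  · contrapose! hPQ
    obtain ⟨h₁, h₂⟩ := hPQ
    have hP' : (a * e - b * c) • P = 0 := by
      calc (a * e - b * c) • P = e • (a • P - c • Q) + c • (e • Q - b • P) := by module
        _ = 0 := by rw [h₁, h₂, smul_zero, smul_zero, add_zero]
    have hQ' : (a * e - b * c) • Q = 0 := by
      calc (a * e - b * c) • Q = b • (a • P - c • Q) + a • (e • Q - b • P) := by module
        _ = 0 := by rw [h₁, h₂, smul_zero, smul_zero, add_zero]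
    exact ⟨(smul_eq_zero_iff_right hdet).1 hP', (smul_eq_zero_iff_right hdet).1 hQ'⟩
  · exact (Polynomial.natDegree_sub_le_of_le ((Polynomial.natDegree_smul_le _ _).trans hP)
      ((Polynomial.natDegree_smul_le _ _).trans hQ)).trans_eq (max_self d)
  · exact (Polynomial.natDegree_sub_le_of_le ((Polynomial.natDegree_smul_le _ _).trans hQ)
      ((Polynomial.natDegree_smul_le _ _).trans hP)).trans_eq (max_self d)
  · simp only [Polynomial.eval_sub, Polynomial.eval_smul, smul_eq_mul]
    linear_combination h y - Q.eval (T y) * hf₂ y + P.eval (T y) * hf₁ y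

end PolyRelation

section Germ

open scoped Nat

variable {𝕜 : Type*} [RCLike 𝕜] {T f₁ f₂ g : 𝕜 → 𝕜} {x : 𝕜} {d : ℕ}

lemma hankelRank_iteratedDeriv_div_comp_le_iff (hf₁ : AnalyticOnNhd 𝕜 f₁ Set.univ)
    (hf₂ : AnalyticOnNhd 𝕜 f₂ Set.univ) (hT : AnalyticOnNhd 𝕜 T Set.univ)
    (hg : AnalyticAt 𝕜 g 0) (hgx : g 0 = x) (hTg : ∀ᶠ t in 𝓝 0, T (g t) = t)
    (hgT : ∀ᶠ y in 𝓝 x, g (T y) = y) (hf₁x : f₁ x ≠ 0) :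
    hankelRank (fun n => iteratedDeriv n (fun t => f₂ (g t) / f₁ (g t)) 0 / n !) ≤ d ↔
      HasPolyRelation T f₁ f₂ d := by
  subst hgx
  have hTx : T (g 0) = 0 := hTg.self_of_nhds
  have hf₁g : AnalyticAt 𝕜 (fun t => f₁ (g t)) 0 := (hf₁ _ (Set.mem_univ _)).comp hg
  have hf₂g : AnalyticAt 𝕜 (fun t => f₂ (g t)) 0 := (hf₂ _ (Set.mem_univ _)).comp hg
  have f₁g_ne_zero : ∀ᶠ t in 𝓝 0, f₁ (g t) ≠ 0 := hf₁g.continuousAt.eventually_ne hf₁x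
  have T_tendsto : Tendsto T (𝓝 (g 0)) (𝓝 0) := by
    simpa only [hTx] using (hT (g 0) (Set.mem_univ _)).continuousAt.tendsto
  rw [hankelRank_iteratedDeriv_le_iff (hf₂g.fun_div hf₁g hf₁x)]
  refine exists₂_congr fun P Q => and_congr_right fun _ => and_congr_right fun _ =>
    and_congr_right fun _ => ⟨fun h => ?_, fun h => ?_⟩
  · have eventually_eq : (fun y => Q.eval (T y) * f₂ y) =ᶠ[𝓝 (g 0)]
        fun y => P.eval (T y) * f₁ y := by
      filter_upwards [T_tendsto.eventually h, T_tendsto.eventually f₁g_ne_zero, hgT]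
        with y hy hy₁ hgTy
      rw [hgTy] at hy hy₁
      rwa [← mul_div_assoc, div_eq_iff hy₁] at hy
    have analyticOnNhd_eval_mul {f : 𝕜 → 𝕜} (p : 𝕜[X]) (hf : AnalyticOnNhd 𝕜 f Set.univ) :
        AnalyticOnNhd 𝕜 (fun y => p.eval (T y) * f y) Set.univ :=
      (hT.aeval_polynomial p).mul hf
    exact congrFun ((analyticOnNhd_eval_mul Q hf₂).eq_of_eventuallyEq
      (analyticOnNhd_eval_mul P hf₁) eventually_eq)
  · filter_upwards [hTg, f₁g_ne_zero] with t ht ht₁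
    have := h (g t)
    rw [ht] at this
    rwa [← mul_div_assoc, div_eq_iff ht₁]

end Germ

section Main

open scoped Nat

variable {θ f₁ f₂ F₁ F₂ : ℝ → ℝ} {R x x₁ x₂ : ℝ} {d : ℕ}

lemma IsFundPair.hankelRank_le_iff (h : IsFundPair θ x f₁ f₂) (hθ : ∀ x, AnalyticAt ℝ θ x)
    (hR : R ≠ 0) :
    hankelRank (fun n => SchR R x f₁ f₂ n / n !) ≤ d ↔
      HasPolyRelation (fun y => gRInv R (y - x)) f₁ f₂ d := by
  have eventually_pos : ∀ᶠ t in 𝓝 (0 : ℝ), 0 < 1 - Real.pi / R * t :=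
    ContinuousAt.eventually_lt (by fun_prop) (by fun_prop) (by simp)
  refine hankelRank_iteratedDeriv_div_comp_le_iff (x := x)
    (g := fun t => x + gR R t) (T := fun y => gRInv R (y - x))
    (h.1.analyticOnNhd hθ) (h.2.1.analyticOnNhd hθ)
    (fun y _ => (analyticAt_gRInv R (y - x)).fun_comp_of_eq (by fun_prop) rfl)
    (analyticAt_const.add (analyticAt_gR eventually_pos.self_of_nhds)) (by simp [gR_zero])
    ?_ (.of_forall fun y => by simp [gR_gRInv hR]) (by simp [h.2.2.1])
  filter_upwards [eventually_pos] with t ht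
  rw [add_sub_cancel_left, gRInv_gR hR ht]

lemma IsFundPair.hasPolyRelation (h₁ : IsFundPair θ x₁ f₁ f₂) (h₂ : IsFundPair θ x₂ F₁ F₂)
    (h : HasPolyRelation (fun y => gRInv R (y - x₂)) F₁ F₂ d) :
    HasPolyRelation (fun y => gRInv R (y - x₁)) f₁ f₂ d := by
  have coord_eq : (fun y => gRInv R (y - x₂)) = fun y =>
      Real.exp (-(Real.pi / R) * (x₁ - x₂)) * gRInv R (y - x₁) + gRInv R (x₁ - x₂) :=
    funext fun y => by rw [← gRInv_add, sub_add_sub_cancel]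
  have hdet : F₁ x₁ * deriv F₂ x₁ - deriv F₁ x₁ * F₂ x₁ ≠ 0 :=
    (h₂.wronskian_eq_one x₁).trans_ne one_ne_zero
  rw [coord_eq] at h
  exact (h.of_affine (Real.exp_ne_zero _)).of_linear hdet (h₁.eq_add_mul h₂.1)
    (h₁.eq_add_mul h₂.2.1)

theorem IsFundPair.hankelRank_eq (h₁ : IsFundPair θ x₁ f₁ f₂) (h₂ : IsFundPair θ x₂ F₁ F₂)
    (hθ : ∀ x, AnalyticAt ℝ θ x) (hR : R ≠ 0) :
    hankelRank (fun n => SchR R x₁ f₁ f₂ n / n !) =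
      hankelRank (fun n => SchR R x₂ F₁ F₂ n / n !) := by
  have le_natCast_iff (d : ℕ) : hankelRank (fun n => SchR R x₁ f₁ f₂ n / n !) ≤ d ↔
      hankelRank (fun n => SchR R x₂ F₁ F₂ n / n !) ≤ d := by
    rw [h₁.hankelRank_le_iff hθ hR, h₂.hankelRank_le_iff hθ hR]
    exact ⟨h₂.hasPolyRelation h₁, h₁.hasPolyRelation h₂⟩
  exact eq_of_forall_ge_iff fun d => by
    induction d using ENat.recTopCoe with
    | top => simp only [le_top]
    | coe d => exact le_natCast_iff d

end Main

theorem stmt17_general (θ : ℝ → ℝ) (hθ : ∀ x : ℝ, AnalyticAt ℝ θ x) (R : ℝ) (hR : R ≠ 0)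
    (S : ℕ → ℝ → ℝ)
    (hS : ∀ (n : ℕ) (x : ℝ) (f₁ f₂ : ℝ → ℝ), IsFundPair θ x f₁ f₂ →
      S n x = SchR R x f₁ f₂ n) :
    ∀ x₁ x₂ : ℝ,
      (⨆ n : ℕ, ((Matrix.of fun i j : Fin n =>
        S (i.1 + j.1 + 1) x₁ / (Nat.factorial (i.1 + j.1 + 1) : ℝ)).rank : ℕ∞)) =
      (⨆ n : ℕ, ((Matrix.of fun i j : Fin n =>
        S (i.1 + j.1 + 1) x₂ / (Nat.factorial (i.1 + j.1 + 1) : ℝ)).rank : ℕ∞)) := by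
  intro x₁ x₂
  obtain ⟨f₁, f₂, hf⟩ := exists_isFundPair hθ x₁
  obtain ⟨F₁, F₂, hF⟩ := exists_isFundPair hθ x₂
  simp only [hS _ x₁ f₁ f₂ hf, hS _ x₂ F₁ F₂ hF]
  exact hf.hankelRank_eq hF hθ hR

/-- For real analytic θ and `R > 0`, the function
`ρ(x) := sup_n rank (n×n Hankel matrix of 𝒮_{i+j-1}^{θ,g_R}(x)/(i+j-1)!)` is constant
on ℝ. -/
theorem stmt17 (θ : ℝ → ℝ) (hθ : ∀ x : ℝ, AnalyticAt ℝ θ x) (R : ℝ) (hR : 0 < R)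
    (S : ℕ → ℝ → ℝ)
    (hS : ∀ (n : ℕ) (x : ℝ) (f₁ f₂ : ℝ → ℝ), IsFundPair θ x f₁ f₂ →
      S n x = SchR R x f₁ f₂ n) :
    ∀ x₁ x₂ : ℝ,
      (⨆ n : ℕ, ((Matrix.of fun i j : Fin n =>
        S (i.1 + j.1 + 1) x₁ / (Nat.factorial (i.1 + j.1 + 1) : ℝ)).rank : ℕ∞)) =
      (⨆ n : ℕ, ((Matrix.of fun i j : Fin n =>
        S (i.1 + j.1 + 1) x₂ / (Nat.factorial (i.1 + j.1 + 1) : ℝ)).rank : ℕ∞)) :=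
  stmt17_general θ hθ R hR.ne' S hS

end
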